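/- Lemma 8: Let U₁₀ = 3 + η₁ + 2η₂ + 3η₃. If d > 3 is a prime divisor of gcd(U₁₀, (4^p − 1)/3), then either d = 11, or d = 1 + 2p and 3p = 4(3+4y)² + 83. -/

import Mathlib

open Finset

/-- The cyclotomic class `D_i` of order 4 modulo `p` with respect to the
primitive root `θ`: `{θ^(i+4j) mod p : 0 ≤ j < (p-1)/4}`. -/
def cycD (p θ i : ℕ) : Finset ℕ :=
  (Finset.range ((p - 1) / 4)).image fun j => θ ^ (i + 4 * j) % p

/-- `η_i = Σ_{t ∈ D_i} 4^t` as an integer. -/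
def eta4 (p θ : ℕ) (i : ℕ) : ℤ := ∑ t ∈ cycD p θ i, (4 : ℤ) ^ t

/-- `H = η₀ + η₂ − η₁ − η₃`. -/
def Hval (p θ : ℕ) : ℤ := eta4 p θ 0 + eta4 p θ 2 - eta4 p θ 1 - eta4 p θ 3


lemma gs_quad {p : ℕ} [Fact p.Prime] {F : Type*} [Field F] (hpF : (p : F) ≠ 0)
    (χ : MulChar (ZMod p) F) (hχ4 : χ ^ 4 = 1) (hχ2 : χ ^ 2 ≠ 1) (hneg : χ (-1) = -1)
    (ψ : AddChar (ZMod p) F) (hψ : ψ.IsPrimitive) :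
    gaussSum χ ψ * gaussSum χ⁻¹ ψ = -(p : F) ∧
    gaussSum χ ψ ^ 2 = jacobiSum χ χ * gaussSum (χ ^ 2) ψ ∧
    gaussSum (χ ^ 2) ψ ^ 2 = (p : F) ∧
    jacobiSum χ (χ ^ 2) = - jacobiSum χ χ := by
  have hχ1 : χ ≠ 1 := by rintro rfl; simp at hχ2
  have hinv : χ⁻¹ = χ ^ 3 := by
    rw [inv_eq_iff_mul_eq_one, ← hχ4]; exact (pow_succ' χ 3).symm
  have hχ3 : χ ^ 3 ≠ 1 := by rw [← hinv]; simpa using hχ1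
  have h2inv : (χ ^ 2)⁻¹ = χ ^ 2 := by
    rw [inv_eq_iff_mul_eq_one, ← hχ4, ← pow_add]
  have key : ∀ φ : MulChar (ZMod p) F, φ ≠ 1 →
      gaussSum φ ψ * gaussSum φ⁻¹ ψ = φ (-1) * (p : F) := by
    intro φ hφ
    have h1 := gaussSum_mul_gaussSum_eq_card hφ hψ
    have h2 := mul_gaussSum_inv_eq_gaussSum φ⁻¹ ψ
    have h3 : φ⁻¹ (-1) = φ (-1) := by
      rw [MulChar.inv_apply']; congr 1; exact inv_neg_one
    rw [ZMod.card] at h1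
    rw [← h2, h3, ← h1]; ring
  have a1 := key χ hχ1
  rw [hneg] at a1
  have a2 := key (χ ^ 2) hχ2
  have hneg2 : (χ ^ 2) (-1) = 1 := by
    rw [MulChar.pow_apply' _ (by norm_num), hneg]; norm_num
  rw [h2inv, hneg2] at a2
  have b1 := jacobiSum_mul_nontrivial (χ := χ) (φ := χ) (by rwa [← pow_two]) ψ
  rw [← pow_two χ] at b1
  have b2 := jacobiSum_mul_nontrivial (χ := χ) (φ := χ ^ 2) (by rwa [← pow_succ']) ψ
  rw [← pow_succ', ← hinv] at b2
  refine ⟨by linear_combination a1, by linear_combination -b1, by linear_combination a2, ?_⟩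
  have hne : gaussSum χ ψ * gaussSum χ⁻¹ ψ ≠ 0 := by rw [a1]; simpa using hpF
  apply mul_left_cancel₀ hne
  generalize gaussSum χ ψ = g at *
  generalize gaussSum χ⁻¹ ψ = g3 at *
  generalize gaussSum (χ ^ 2) ψ = h at *
  linear_combination g * b2 - h * b1 + jacobiSum χ χ * a2 + jacobiSum χ χ * a1

/-- the imaginary unit -/
def gI : GaussianInt := ⟨0, 1⟩

lemma gI_sq : gI * gI = -1 := by
  ext <;> simp [gI]

lemma gI_ne : gI ≠ 1 ∧ gI ≠ -1 ∧ (-1 : GaussianInt) ≠ 1 := by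
  refine ⟨?_, ?_, ?_⟩ <;> intro h <;> simp [gI, Zsqrtd.ext_iff] at h

lemma exists_chi {p θ : ℕ} [Fact p.Prime] (hp8 : p % 8 = 5)
    (hθ : IsPrimitiveRoot (θ : ZMod p) (p - 1)) :
    ∃ χ : MulChar (ZMod p) GaussianInt, χ (θ : ZMod p) = gI ∧ χ (-1) = -1 ∧ χ ^ 4 = 1 ∧
      χ ^ 2 ≠ 1 ∧ χ⁻¹ = χ.ringHomComp (starRingEnd GaussianInt) := by
  have hp1 : p - 1 ≠ 0 := by omega
  have hu : IsUnit (θ : ZMod p) := hθ.isUnit hp1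
  obtain ⟨g, hg⟩ := hu
  have hg' : IsPrimitiveRoot g (p - 1) := by
    rw [← hg] at hθ; exact IsPrimitiveRoot.coe_units_iff.mp hθ
  have hcard : Fintype.card (ZMod p)ˣ = p - 1 := ZMod.card_units p
  have hgen : ∀ x, x ∈ Subgroup.zpowers g := by
    intro x
    have : NeZero (p - 1) := ⟨hp1⟩
    rw [hg'.zpowers_eq, mem_rootsOfUnity]
    exact ZMod.units_pow_card_sub_one_eq_one p x
  let ζ : GaussianIntˣ := ⟨gI, -gI, by rw [mul_neg, gI_sq, neg_neg], by rw [neg_mul, gI_sq, neg_neg]⟩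
  have hζ4 : ζ ^ 4 = 1 := by
    ext1
    push_cast
    show gI ^ 4 = 1
    linear_combination (gI * gI - 1) * gI_sq
  have hζ : ζ ∈ rootsOfUnity (Fintype.card (ZMod p)ˣ) GaussianInt := by
    rw [mem_rootsOfUnity, hcard, show p - 1 = 4 * ((p - 1) / 4) by omega, pow_mul, hζ4, one_pow]
  have hs := MulChar.ofRootOfUnity_spec hζ hgen
  set χ := MulChar.ofRootOfUnity hζ hgen with hχ
  have hs' : χ (g : ZMod p) = gI := hs
  refine ⟨χ, by rw [← hg, hs'], ?_, ?_, ?_, ?_⟩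
  · have : ((g : ZMod p)) ^ ((p - 1) / 2) = -1 := by
      have h2 : ((g : ZMod p) ^ ((p - 1) / 2)) ^ 2 = 1 := by
        rw [← pow_mul, show (p - 1) / 2 * 2 = p - 1 by omega, hg, hθ.pow_eq_one]
      rcases (eq_or_eq_neg_of_sq_eq_sq _ _ (h2.trans (one_pow 2).symm)) with h | h
      · rw [hg] at h
        have := Nat.le_of_dvd (by omega) (hθ.dvd_of_pow_eq_one _ h)
        omega
      · exact h
    rw [← this, map_pow, hs']
    obtain ⟨k, hk⟩ : ∃ k, (p - 1) / 2 = 4 * k + 2 := ⟨(p - 1) / 8, by omega⟩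
    rw [hk, pow_add, pow_mul, show gI ^ 4 = 1 by linear_combination (gI * gI - 1) * gI_sq, one_pow,
      one_mul, pow_two, gI_sq]
  · rw [MulChar.eq_iff hgen, MulChar.pow_apply' _ (by norm_num), hs', MulChar.one_apply_coe]
    linear_combination (gI * gI - 1) * gI_sq
  · rw [Ne, MulChar.eq_iff hgen, MulChar.pow_apply' _ (by norm_num), hs', MulChar.one_apply_coe,
      pow_two, gI_sq]
    exact gI_ne.2.2
  · rw [MulChar.eq_iff hgen, MulChar.ringHomComp_apply, hs', MulChar.inv_apply_eq_inv, hs']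
    have : Ring.inverse gI = -gI := Ring.inverse_unit ζ
    rw [this, starRingEnd_apply]
    ext <;> simp [gI]

lemma sum_shift {p : ℕ} [Fact p.Prime] {R : Type*} [CommRing R] (φ ψ : MulChar (ZMod p) R) :
    ∑ a : ZMod p, φ a * ψ (a + 1) = φ (-1) * jacobiSum φ ψ := by
  rw [jacobiSum, Finset.mul_sum, ← Equiv.sum_comp (Equiv.neg (ZMod p))]
  apply Finset.sum_congr rfl
  intro x _
  rw [Equiv.neg_apply, neg_eq_neg_one_mul x, map_mul, mul_assoc]
  congr 3
  ring

lemma jac_facts {p : ℕ} [Fact p.Prime] (χ : MulChar (ZMod p) GaussianInt) (hneg : χ (-1) = -1)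
    (h4 : χ ^ 4 = 1) (h2 : χ ^ 2 ≠ 1) (hstar : χ⁻¹ = χ.ringHomComp (starRingEnd GaussianInt)) :
    jacobiSum χ (χ ^ 2) = - jacobiSum χ χ ∧ jacobiSum χ⁻¹ (χ ^ 2) = - star (jacobiSum χ χ) ∧
    jacobiSum χ⁻¹ χ⁻¹ = star (jacobiSum χ χ) ∧ jacobiSum χ χ * star (jacobiSum χ χ) = (p : GaussianInt) := by
  have hJs : jacobiSum χ⁻¹ χ⁻¹ = star (jacobiSum χ χ) := by
    rw [hstar, jacobiSum_ringHomComp, starRingEnd_apply]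
  have hinj : Function.Injective GaussianInt.toComplex := GaussianInt.toComplex_injective
  have hpC : (p : ℂ) ≠ 0 := by exact_mod_cast (Fact.out : p.Prime).ne_zero
  have gen : ∀ φ : MulChar (ZMod p) GaussianInt, φ (-1) = -1 → φ ^ 4 = 1 → φ ^ 2 ≠ 1 →
      jacobiSum φ (φ ^ 2) = - jacobiSum φ φ ∧
      jacobiSum φ φ * jacobiSum φ⁻¹ φ⁻¹ = (p : GaussianInt) := by
    intro φ a b c
    have base : ∀ φ : MulChar (ZMod p) GaussianInt, φ (-1) = -1 → φ ^ 4 = 1 → φ ^ 2 ≠ 1 → _ := 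
      fun φ a b c => gs_quad (p := p) hpC (φ.ringHomComp GaussianInt.toComplex)
        (by rw [MulChar.ringHomComp_pow, b, MulChar.ringHomComp_one])
        (by rw [MulChar.ringHomComp_pow]; exact (MulChar.ringHomComp_ne_one_iff hinj).mpr c)
        (by rw [MulChar.ringHomComp_apply, a]; simp)
        ZMod.stdAddChar (ZMod.isPrimitive_stdAddChar p)
    have h1 := base φ a b c
    have h2 := base φ⁻¹ (by rw [MulChar.inv_apply', inv_neg_one, a]) (by rw [inv_pow, b, inv_one])
      (by rw [inv_pow]; simpa using c)
    have h2inv : (φ⁻¹) ^ 2 = φ ^ 2 := by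
      rw [inv_pow, inv_eq_iff_mul_eq_one, ← b, ← pow_add]
    rw [MulChar.ringHomComp_pow, MulChar.ringHomComp_inv, jacobiSum_ringHomComp,
      jacobiSum_ringHomComp] at h1
    rw [MulChar.ringHomComp_pow, h2inv, MulChar.ringHomComp_inv, jacobiSum_ringHomComp,
      jacobiSum_ringHomComp] at h2
    obtain ⟨a1, a2, a3, a4⟩ := h1
    obtain ⟨b1, b2, b3, b4⟩ := h2
    refine ⟨hinj (by rw [a4, map_neg]), hinj ?_⟩
    rw [map_mul, map_natCast]
    apply mul_left_cancel₀ hpC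
    generalize gaussSum (φ.ringHomComp GaussianInt.toComplex) ZMod.stdAddChar = g at *
    generalize gaussSum (φ⁻¹.ringHomComp GaussianInt.toComplex) ZMod.stdAddChar = g3 at *
    generalize gaussSum ((φ ^ 2).ringHomComp GaussianInt.toComplex) ZMod.stdAddChar = h at *
    linear_combination (-GaussianInt.toComplex (jacobiSum φ φ) * GaussianInt.toComplex (jacobiSum φ⁻¹ φ⁻¹)) * a3 -
      g3 ^ 2 * a2 - GaussianInt.toComplex (jacobiSum φ φ) * h * b2 + (g * g3 - p) * a1
  have h2inv : (χ⁻¹) ^ 2 = χ ^ 2 := by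
    rw [inv_pow, inv_eq_iff_mul_eq_one, ← h4, ← pow_add]
  have h2 := gen χ⁻¹ (by rw [MulChar.inv_apply', inv_neg_one, hneg]) (by rw [inv_pow, h4, inv_one])
      (by rw [inv_pow]; simpa using h2)
  have h1 := gen χ hneg h4 ‹_›
  rw [h2inv, hJs] at h2
  rw [hJs] at h1
  exact ⟨h1.1, h2.1, hJs, h1.2⟩

lemma cyc_sum {p : ℕ} [Fact p.Prime] (χ : MulChar (ZMod p) GaussianInt) (hneg : χ (-1) = -1)
    (h4 : χ ^ 4 = 1) (h2 : χ ^ 2 ≠ 1) (hstar : χ⁻¹ = χ.ringHomComp (starRingEnd GaussianInt)) :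
    ∑ a : ZMod p, ((1 : MulChar (ZMod p) GaussianInt) a + χ a + (χ ^ 2) a + χ⁻¹ a) *
      ((1 : MulChar (ZMod p) GaussianInt) (a + 1) - gI * χ (a + 1) - (χ ^ 2) (a + 1)
        + gI * χ⁻¹ (a + 1)) = p + 1 + 2 * gI * (jacobiSum χ χ - star (jacobiSum χ χ))
        - (jacobiSum χ χ + star (jacobiSum χ χ)) := by
  obtain ⟨j1, j2, j3, -⟩ := jac_facts χ hneg h4 h2 hstar
  have hχ1 : χ ≠ 1 := by rintro rfl; simp at h2
  have hχi : χ⁻¹ ≠ 1 := by simpa using hχ1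
  have h2inv : (χ ^ 2)⁻¹ = χ ^ 2 := by
    rw [inv_eq_iff_mul_eq_one, ← h4, ← pow_add]
  have hn2 : (χ ^ 2) (-1) = 1 := by
    rw [MulChar.pow_apply' _ (by norm_num), hneg]; norm_num
  have hni : χ⁻¹ (-1) = -1 := by rw [MulChar.inv_apply', inv_neg_one, hneg]
  have hn1 : (1 : MulChar (ZMod p) GaussianInt) (-1) = 1 := by
    exact MulChar.one_apply (by simp)
  have k1 : jacobiSum (χ ^ 2) (χ ^ 2) = -1 := by
    have := jacobiSum_nontrivial_inv h2
    rwa [h2inv, hn2] at this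
  have k2 : jacobiSum χ χ⁻¹ = 1 := by
    rw [jacobiSum_nontrivial_inv hχ1, hneg, neg_neg]
  have k3 : jacobiSum χ⁻¹ χ = 1 := by rw [jacobiSum_comm, k2]
  have k4 : jacobiSum (1 : MulChar (ZMod p) GaussianInt) 1 = p - 2 := by
    rw [jacobiSum_one_one, ZMod.card]
  have k5 := jacobiSum_one_nontrivial hχ1
  have k6 := jacobiSum_one_nontrivial hχi
  have k7 := jacobiSum_one_nontrivial h2
  have s := fun φ ψ : MulChar (ZMod p) GaussianInt => sum_shift φ ψ
  have expand : ∀ a : ZMod p, ((1 : MulChar (ZMod p) GaussianInt) a + χ a + (χ ^ 2) a + χ⁻¹ a) *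
      ((1 : MulChar (ZMod p) GaussianInt) (a + 1) - gI * χ (a + 1) - (χ ^ 2) (a + 1)
        + gI * χ⁻¹ (a + 1)) = 
      ∑ i : Fin 4, ∑ j : Fin 4, (![1, -gI, -1, gI] j) *
        ((![1, χ, χ ^ 2, χ⁻¹] i) a * (![1, χ, χ ^ 2, χ⁻¹] j) (a + 1)) := by
    intro a
    simp [Fin.sum_univ_four]
    ring
  simp_rw [expand]
  rw [Finset.sum_comm]
  simp_rw [Finset.sum_comm (s := (univ : Finset (ZMod p))), ← Finset.mul_sum, sum_shift]
  simp only [Fin.sum_univ_four, Matrix.cons_val_zero, Matrix.cons_val_one, Matrix.cons_val]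
  rw [hn1, hn2, hni, hneg, jacobiSum_comm χ 1, jacobiSum_comm χ⁻¹ 1, jacobiSum_comm (χ ^ 2) 1,
    jacobiSum_comm (χ ^ 2) χ, jacobiSum_comm (χ ^ 2) χ⁻¹, j1, j2, j3, k1, k2, k3, k4, k5, k6, k7]
  ring

lemma gI_pow4 : gI ^ 4 = 1 := by linear_combination (gI * gI - 1) * gI_sq

lemma gI_pow_inj (a b : ℕ) (ha : a < 4) (hb : b < 4) (h : gI ^ a = gI ^ b) : a = b := by
  interval_cases a <;> interval_cases b <;>
    simp [gI, Zsqrtd.ext_iff, pow_succ] at h ⊢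

lemma cycD_lt {p θ k t : ℕ} (hp : 0 < p) (h : t ∈ cycD p θ k) : t < p := by
  simp only [cycD, Finset.mem_image] at h
  obtain ⟨j, -, rfl⟩ := h
  exact Nat.mod_lt _ hp

lemma chi_vals {p θ : ℕ} [Fact p.Prime] (hp8 : p % 8 = 5)
    (hθ : IsPrimitiveRoot (θ : ZMod p) (p - 1)) (χ : MulChar (ZMod p) GaussianInt)
    (hχ : χ (θ : ZMod p) = gI) (a : ZMod p) :
    a = 0 ∨ (a ≠ 0 ∧ ∃ k < 4, ∃ j < (p - 1) / 4, a = (θ : ZMod p) ^ (k + 4 * j) ∧ χ a = gI ^ k) := by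
  by_cases h : a = 0
  · exact Or.inl h
  right
  refine ⟨h, ?_⟩
  have : NeZero (p - 1) := ⟨by omega⟩
  obtain ⟨n, hn, rfl⟩ := hθ.eq_pow_of_pow_eq_one (ZMod.pow_card_sub_one_eq_one h)
  have e : n % 4 + 4 * (n / 4) = n := Nat.mod_add_div n 4
  refine ⟨n % 4, Nat.mod_lt _ (by norm_num), n / 4, by omega, by rw [e], ?_⟩
  rw [map_pow, hχ]
  conv_lhs => rw [← e, pow_add, pow_mul, gI_pow4, one_pow, mul_one]

lemma mem_cycD {p θ : ℕ} [Fact p.Prime] (hp8 : p % 8 = 5)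
    (hθ : IsPrimitiveRoot (θ : ZMod p) (p - 1)) (χ : MulChar (ZMod p) GaussianInt)
    (hχ : χ (θ : ZMod p) = gI) (t : ℕ) (ht : t < p) (k : ℕ) (hk : k < 4) :
    t ∈ cycD p θ k ↔ χ (t : ZMod p) = gI ^ k := by
  simp only [cycD, Finset.mem_image, Finset.mem_range]
  constructor
  · rintro ⟨j, -, rfl⟩
    rw [ZMod.natCast_mod, Nat.cast_pow, map_pow, hχ, pow_add, pow_mul, gI_pow4, one_pow, mul_one]
  · intro h
    rcases chi_vals hp8 hθ χ hχ (t : ZMod p) with h0 | ⟨-, k', hk', j, hj, e1, e2⟩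
    · rw [h0, MulChar.map_zero] at h
      exfalso
      have : (0 : GaussianInt) ^ 4 = 1 := by
        rw [h, ← pow_mul, mul_comm, pow_mul, gI_pow4, one_pow]
      norm_num at this
    · have := gI_pow_inj _ _ hk hk' (h.symm.trans e2)
      subst this
      refine ⟨j, hj, ?_⟩
      have e3 : ((θ ^ (k + 4 * j) : ℕ) : ZMod p) = (t : ZMod p) := by rw [e1]; push_cast; rfl
      rw [ZMod.natCast_eq_natCast_iff] at e3
      rw [e3, Nat.mod_eq_of_lt ht]

lemma card_eq {p θ : ℕ} [Fact p.Prime] (hp8 : p % 8 = 5)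
    (hθ : IsPrimitiveRoot (θ : ZMod p) (p - 1)) (χ : MulChar (ZMod p) GaussianInt)
    (hχ : χ (θ : ZMod p) = gI) :
    ((cycD p θ 0).filter (fun a => (a + 1) % p ∈ cycD p θ 1)).card =
      ((Finset.univ : Finset (ZMod p)).filter (fun a => χ a = 1 ∧ χ (a + 1) = gI)).card := by
  have hp0 : 0 < p := by omega
  have key : ∀ t, t < p → (t ∈ cycD p θ 0 ∧ (t + 1) % p ∈ cycD p θ 1 ↔
      χ (t : ZMod p) = 1 ∧ χ ((t : ZMod p) + 1) = gI) := by
    intro t ht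
    rw [mem_cycD hp8 hθ χ hχ t ht 0 (by norm_num),
      mem_cycD hp8 hθ χ hχ _ (Nat.mod_lt _ hp0) 1 (by norm_num), ZMod.natCast_mod]
    push_cast
    simp
  apply Finset.card_nbij' (fun a : ℕ => (a : ZMod p)) ZMod.val
  · intro a ha
    simp only [Finset.coe_filter, Set.mem_ofPred_eq, Finset.mem_univ, true_and] at ha ⊢
    exact (key a (cycD_lt hp0 ha.1)).1 ha
  · intro a ha
    simp only [Finset.coe_filter, Set.mem_ofPred_eq, Finset.mem_univ, true_and] at ha ⊢
    rw [key _ (ZMod.val_lt a)]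
    simpa using ha
  · intro a ha
    simp only [Finset.coe_filter, Set.mem_ofPred_eq] at ha
    exact ZMod.val_cast_of_lt (cycD_lt hp0 ha.1)
  · intro a ha
    simp

lemma eta_eq {p θ : ℕ} [Fact p.Prime] (hp8 : p % 8 = 5)
    (hθ : IsPrimitiveRoot (θ : ZMod p) (p - 1)) (χ : MulChar (ZMod p) GaussianInt)
    (hχ : χ (θ : ZMod p) = gI) {K : Type*} [CommRing K] (h4 : (4 : K) ^ p = 1) (k : ℕ) (hk : k < 4) :
    ((eta4 p θ k : ℤ) : K) = ∑ t : ZMod p, if χ t = gI ^ k then AddChar.zmodChar p h4 t else 0 := by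
  have hp0 : 0 < p := by omega
  rw [← Finset.sum_filter, eta4, Int.cast_sum]
  apply Finset.sum_nbij' (fun a : ℕ => (a : ZMod p)) ZMod.val
  · intro a ha
    simp only [Finset.mem_filter, Finset.mem_univ, true_and]
    exact (mem_cycD hp8 hθ χ hχ a (cycD_lt hp0 ha) k hk).1 ha
  · intro a ha
    simp only [Finset.mem_filter, Finset.mem_univ, true_and] at ha
    rw [mem_cycD hp8 hθ χ hχ _ (ZMod.val_lt a) k hk]
    simpa using ha
  · intro a ha
    exact ZMod.val_cast_of_lt (cycD_lt hp0 ha)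
  · intro a ha
    simp
  · intro a ha
    rw [AddChar.zmodChar_apply']
    push_cast
    rfl

lemma two_sq_uniq (p : ℕ) (hp : p.Prime) (hp8 : p % 8 = 5) (x y a b : ℤ) (hx : x % 4 = 1)
    (hxy : (p : ℤ) = x ^ 2 + 4 * y ^ 2) (hab : (p : ℤ) = a ^ 2 + b ^ 2)
    (h : x - 4 * y = a - 2 * b) : x = a ∧ b = 2 * y := by
  have hao : a % 2 = 1 := by omega
  have hbe : b % 2 = 0 := by
    rcases Int.emod_two_eq_zero_or_one b with h | h
    · exact h
    · exfalso
      obtain ⟨c, hc⟩ : ∃ c, a = 2 * c + 1 := ⟨a / 2, by omega⟩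
      obtain ⟨e, he⟩ : ∃ e, b = 2 * e + 1 := ⟨b / 2, by omega⟩
      have : (p : ℤ) = 2 * (2 * c ^ 2 + 2 * c + 2 * e ^ 2 + 2 * e + 1) := by rw [hab, hc, he]; ring
      omega
  obtain ⟨c, rfl⟩ : ∃ c, b = 2 * c := ⟨b / 2, by omega⟩
  obtain ⟨u, rfl⟩ : ∃ u, y = c + u := ⟨y - c, by ring⟩
  obtain rfl : x = a + 4 * u := by linarith
  have hu : u * (5 * u + 2 * (a + c)) = 0 := by nlinarith
  have hu0 : u = 0 := by
    rcases mul_eq_zero.mp hu with h | h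
    · exact h
    obtain ⟨v, rfl⟩ : ∃ v, u = 2 * v := ⟨u / 2, by omega⟩
    obtain rfl : c = -5 * v - a := by linarith
    have h5 : (5 : ℤ) ∣ (p : ℤ) := ⟨a ^ 2 + 20 * v ^ 2 + 8 * v * a, by rw [hab]; ring⟩
    have h5' : 5 ∣ p := by exact_mod_cast h5
    have hp5 : p = 5 := ((Nat.prime_dvd_prime_iff_eq (by norm_num) hp).mp h5').symm
    subst hp5
    have : 5 * (a + 4 * v) ^ 2 + 20 * v ^ 2 = 5 := by push_cast at hab; linarith
    have : v ^ 2 < 1 := by nlinarith [sq_nonneg (a + 4 * v)]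
    have : v = 0 := by nlinarith [sq_nonneg v, sq_nonneg (v-1), sq_nonneg (v+1), sq_lt_one_iff_abs_lt_one v, Int.abs_lt_one_iff (a := v)]
    simp [this]
  subst hu0
  constructor <;> ring

lemma xy_eq {p θ : ℕ} [Fact p.Prime] (hp8 : p % 8 = 5) (x y : ℤ) (hx : x % 4 = 1)
    (hxy : (p : ℤ) = x ^ 2 + 4 * y ^ 2)
    (hθ : IsPrimitiveRoot (θ : ZMod p) (p - 1)) (χ : MulChar (ZMod p) GaussianInt)
    (hχ : χ (θ : ZMod p) = gI) (hneg : χ (-1) = -1)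
    (h4 : χ ^ 4 = 1) (h2 : χ ^ 2 ≠ 1) (hstar : χ⁻¹ = χ.ringHomComp (starRingEnd GaussianInt))
    (hy : 16 * (((cycD p θ 0).filter (fun a => (a + 1) % p ∈ cycD p θ 1)).card : ℤ)
        = (p : ℤ) + 1 + 2 * x - 8 * y) :
    jacobiSum χ χ = ⟨-x, 2 * y⟩ := by
  have hs := cyc_sum χ hneg h4 h2 hstar
  have hn := (jac_facts χ hneg h4 h2 hstar).2.2.2
  have hsum : ∑ a : ZMod p, ((1 : MulChar (ZMod p) GaussianInt) a + χ a + (χ ^ 2) a + χ⁻¹ a) *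
      ((1 : MulChar (ZMod p) GaussianInt) (a + 1) - gI * χ (a + 1) - (χ ^ 2) (a + 1)
        + gI * χ⁻¹ (a + 1)) = ((16 * (((cycD p θ 0).filter
          (fun a => (a + 1) % p ∈ cycD p θ 1)).card : ℤ) : ℤ) : GaussianInt) := by
    rw [card_eq hp8 hθ χ hχ, Finset.card_filter]
    push_cast
    rw [Finset.mul_sum]
    apply Finset.sum_congr rfl
    intro a _
    have f1 : (1 : MulChar (ZMod p) GaussianInt) a + χ a + (χ ^ 2) a + χ⁻¹ a =
        if χ a = 1 then 4 else 0 := by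
      rcases chi_vals hp8 hθ χ hχ a with rfl | ⟨h0, k, hk, -, -, -, e⟩
      · simp only [MulChar.map_zero]; simp
      · rw [MulChar.one_apply h0.isUnit, hstar, MulChar.pow_apply' _ (by norm_num),
          MulChar.ringHomComp_apply, e, starRingEnd_apply]
        interval_cases k <;> simp [gI, Zsqrtd.ext_iff, pow_succ]
    have f2 : ∀ b, (1 : MulChar (ZMod p) GaussianInt) b - gI * χ b - (χ ^ 2) b + gI * χ⁻¹ b =
        if χ b = gI then 4 else 0 := by
      intro b
      rcases chi_vals hp8 hθ χ hχ b with rfl | ⟨h0, k, hk, -, -, -, e⟩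
      · simp only [MulChar.map_zero]; simp [gI, Zsqrtd.ext_iff]
      · rw [MulChar.one_apply h0.isUnit, hstar, MulChar.pow_apply' _ (by norm_num),
          MulChar.ringHomComp_apply, e, starRingEnd_apply]
        interval_cases k <;> simp [gI, Zsqrtd.ext_iff, pow_succ]
    rw [f1, f2]
    by_cases c1 : χ a = 1 <;> by_cases c2 : χ (a + 1) = gI <;> simp [c1, c2]
    norm_num
  rw [hsum, hy] at hs
  generalize jacobiSum χ χ = J at *
  obtain ⟨a, b⟩ := J
  simp [Zsqrtd.ext_iff, gI] at hs hn
  ring_nf at hs hn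
  obtain ⟨e1, e2⟩ := two_sq_uniq p Fact.out hp8 x y (-a) b hx hxy (by linarith) (by linarith)
  rw [Zsqrtd.ext_iff]
  exact ⟨by simp; linarith, e2⟩

lemma period_rel {p θ : ℕ} [Fact p.Prime] (hp8 : p % 8 = 5) (x y : ℤ) (hx : x % 4 = 1)
    (hxy : (p : ℤ) = x ^ 2 + 4 * y ^ 2)
    (hθ : IsPrimitiveRoot (θ : ZMod p) (p - 1))
    (hy : 16 * (((cycD p θ 0).filter (fun a => (a + 1) % p ∈ cycD p θ 1)).card : ℤ)
        = (p : ℤ) + 1 + 2 * x - 8 * y)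
    {K : Type*} [Field K] (i : K) (hi : i * i = -1) (h20 : (2 : K) ≠ 0) (hp0 : (p : K) ≠ 0)
    (h4 : IsPrimitiveRoot (4 : K) p)
    (hU : ((3 + eta4 p θ 1 + 2 * eta4 p θ 2 + 3 * eta4 p θ 3 : ℤ) : K) = 0) :
    (((5 * p + 9) ^ 2 - 4 * p * (3 + 4 * y) ^ 2 : ℤ) : K) = 0 := by
  obtain ⟨χ, hχ, hneg, hχ4, hχ2, hstar⟩ := exists_chi hp8 hθ
  have hJ := xy_eq hp8 x y hx hxy hθ χ hχ hneg hχ4 hχ2 hstar hy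
  have hJ' := (jac_facts χ hneg hχ4 hχ2 hstar).2.2.1
  rw [hJ] at hJ'
  let f : GaussianInt →+* K := Zsqrtd.lift ⟨i, by rw [hi]; simp⟩
  have hf : ∀ a b : ℤ, f ⟨a, b⟩ = a + b * i := fun a b => rfl
  have hfI : f gI = i := by rw [gI, hf]; simp
  have hi0 : i ≠ 0 := by rintro rfl; simp at hi
  have h11 : (-1 : K) ≠ 1 := by
    intro h; apply h20; linear_combination -h
  have hψ := AddChar.zmodChar_primitive_of_primitive_root p h4
  have h4p : (4 : K) ^ p = 1 := h4.pow_eq_one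
  set ψ := AddChar.zmodChar p h4p with hψdef
  have hc4 : (χ.ringHomComp f) ^ 4 = 1 := by
    rw [MulChar.ringHomComp_pow, hχ4, MulChar.ringHomComp_one]
  have hc2 : (χ.ringHomComp f) ^ 2 ≠ 1 := by
    intro h
    have h1 := congrArg (fun φ : MulChar (ZMod p) K => φ (θ : ZMod p)) h
    have hu : IsUnit (θ : ZMod p) := hθ.isUnit (by omega)
    rw [MulChar.pow_apply' _ two_ne_zero, MulChar.ringHomComp_apply, hχ, hfI,
      MulChar.one_apply hu, pow_two, hi] at h1
    exact h11 h1
  have hcn : (χ.ringHomComp f) (-1) = -1 := by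
    rw [MulChar.ringHomComp_apply, hneg]; simp
  have h2inv : (χ⁻¹) ^ 2 = χ ^ 2 := by
    rw [inv_pow, inv_eq_iff_mul_eq_one, ← hχ4, ← pow_add]
  obtain ⟨r1, r2, r3, -⟩ := gs_quad hp0 (χ.ringHomComp f) hc4 hc2 hcn ψ hψ
  obtain ⟨-, s2, -, -⟩ := gs_quad hp0 (χ⁻¹.ringHomComp f)
    (by rw [← MulChar.ringHomComp_inv, inv_pow, hc4, inv_one])
    (by rw [← MulChar.ringHomComp_inv, inv_pow]; simpa using hc2)
    (by rw [MulChar.ringHomComp_apply, MulChar.inv_apply', inv_neg_one, hneg]; simp) ψ hψ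
  rw [MulChar.ringHomComp_pow, jacobiSum_ringHomComp, h2inv, hJ'] at s2
  rw [MulChar.ringHomComp_pow, jacobiSum_ringHomComp, hJ] at r2
  rw [MulChar.ringHomComp_pow] at r3
  rw [MulChar.ringHomComp_inv] at r1
  have hE : ∀ k, k < 4 → ((eta4 p θ k : ℤ) : K) = ∑ t : ZMod p, if χ t = gI ^ k then ψ t else 0 :=
    fun k hk => eta_eq hp8 hθ χ hχ h4p k hk
  have g1 : gaussSum (χ.ringHomComp f) ψ = (eta4 p θ 0 : K) + i * (eta4 p θ 1 : K)
      - (eta4 p θ 2 : K) - i * (eta4 p θ 3 : K) := by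
    rw [hE 0 (by norm_num), hE 1 (by norm_num), hE 2 (by norm_num), hE 3 (by norm_num), gaussSum,
      Finset.mul_sum, Finset.mul_sum, ← Finset.sum_add_distrib, ← Finset.sum_sub_distrib,
      ← Finset.sum_sub_distrib]
    apply Finset.sum_congr rfl
    intro t _
    rcases chi_vals hp8 hθ χ hχ t with rfl | ⟨h0, k, hk, -, -, -, e⟩
    · simp only [MulChar.map_zero]; simp [gI, Zsqrtd.ext_iff, pow_succ]
    · rw [MulChar.ringHomComp_apply, e, map_pow, hfI]
      interval_cases k <;> simp [gI, Zsqrtd.ext_iff, pow_succ, hi]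
  have g3 : gaussSum (χ⁻¹.ringHomComp f) ψ = (eta4 p θ 0 : K) - i * (eta4 p θ 1 : K)
      - (eta4 p θ 2 : K) + i * (eta4 p θ 3 : K) := by
    rw [hE 0 (by norm_num), hE 1 (by norm_num), hE 2 (by norm_num), hE 3 (by norm_num), gaussSum,
      Finset.mul_sum, Finset.mul_sum, ← Finset.sum_sub_distrib, ← Finset.sum_sub_distrib,
      ← Finset.sum_add_distrib]
    apply Finset.sum_congr rfl
    intro t _
    rcases chi_vals hp8 hθ χ hχ t with rfl | ⟨h0, k, hk, -, -, -, e⟩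
    · simp only [MulChar.map_zero]; simp [gI, Zsqrtd.ext_iff, pow_succ]
    · rw [MulChar.ringHomComp_apply, hstar, MulChar.ringHomComp_apply, e, starRingEnd_apply, star_pow,
        show star gI = -gI by ext <;> simp [gI], map_pow, map_neg, hfI]
      interval_cases k <;> simp [gI, Zsqrtd.ext_iff, pow_succ, hi]
  have g2 : gaussSum ((χ ^ 2).ringHomComp f) ψ = (eta4 p θ 0 : K) - (eta4 p θ 1 : K)
      + (eta4 p θ 2 : K) - (eta4 p θ 3 : K) := by
    rw [hE 0 (by norm_num), hE 1 (by norm_num), hE 2 (by norm_num), hE 3 (by norm_num), gaussSum,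
      ← Finset.sum_sub_distrib, ← Finset.sum_add_distrib, ← Finset.sum_sub_distrib]
    apply Finset.sum_congr rfl
    intro t _
    rcases chi_vals hp8 hθ χ hχ t with rfl | ⟨h0, k, hk, -, -, -, e⟩
    · simp only [MulChar.map_zero]; simp [gI, Zsqrtd.ext_iff, pow_succ]
    · rw [MulChar.ringHomComp_apply, MulChar.pow_apply' _ two_ne_zero, e, map_pow, map_pow, hfI]
      interval_cases k <;> simp [gI, Zsqrtd.ext_iff, pow_succ, hi]
  have g0 : (eta4 p θ 0 : K) + (eta4 p θ 1 : K) + (eta4 p θ 2 : K) + (eta4 p θ 3 : K) = -1 := by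
    have h1 : ∑ t : ZMod p, ψ t = 0 := AddChar.sum_eq_zero_of_ne_one (by
      intro h
      have h2 : ψ 1 = 1 := by rw [h]; rfl
      rw [hψdef, AddChar.zmodChar_apply, ZMod.val_one] at h2
      have : (p : ℕ) ∣ 1 := h4.dvd_of_pow_eq_one 1 h2
      have := Nat.le_of_dvd one_pos this
      omega)
    have h2 : ∑ t : ZMod p, (if t = 0 then (-1 : K) else 0) = -1 := by simp
    have h3 : (eta4 p θ 0 : K) + (eta4 p θ 1 : K) + (eta4 p θ 2 : K) + (eta4 p θ 3 : K) =
        ∑ t : ZMod p, ((if t = 0 then (-1 : K) else 0) + ψ t) := by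
      rw [hE 0 (by norm_num), hE 1 (by norm_num), hE 2 (by norm_num), hE 3 (by norm_num),
        ← Finset.sum_add_distrib, ← Finset.sum_add_distrib, ← Finset.sum_add_distrib]
      apply Finset.sum_congr rfl
      intro t _
      rcases chi_vals hp8 hθ χ hχ t with rfl | ⟨h0, k, hk, -, -, -, e⟩
      · simp only [MulChar.map_zero]; simp [gI, Zsqrtd.ext_iff, pow_succ]
      · rw [e, if_neg h0]
        interval_cases k <;> simp [gI, Zsqrtd.ext_iff, pow_succ]
    rw [h3, Finset.sum_add_distrib, h1, h2, add_zero]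
  rw [g1, g3] at r1
  rw [g1, g2] at r2
  rw [g2] at r3
  rw [g3, g2] at s2
  rw [show star (⟨-x, 2 * y⟩ : GaussianInt) = ⟨-x, -(2 * y)⟩ from rfl, hf] at s2
  rw [hf] at r2
  push_cast at r2 s2 hU ⊢
  generalize (eta4 p θ 0 : K) = e0 at *
  generalize (eta4 p θ 1 : K) = e1 at *
  generalize (eta4 p θ 2 : K) = e2 at *
  generalize (eta4 p θ 3 : K) = e3 at *
  clear hE hJ hJ' hxy hy
  have q1 : (e0 - e2) ^ 2 + (e1 - e3) ^ 2 = -(p : K) := by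
    linear_combination r1 + (e1 - e3) ^ 2 * hi
  have q2 : (e0 - e2) * (e1 - e3) = y * (e0 - e1 + e2 - e3) := by
    have h4i : (4 : K) * i ≠ 0 := mul_ne_zero (by
      rw [show (4 : K) = 2 * 2 by norm_num]; exact mul_ne_zero h20 h20) hi0
    apply mul_left_cancel₀ h4i
    linear_combination r2 - s2
  have q3 : 2 * ((e0 - e2) + (e1 - e3)) = 3 - (e0 - e1 + e2 - e3) := by
    linear_combination (-2) * hU + 3 * g0
  have q4 : (5 * (p : K) + 9) = (6 + 8 * y) * (e0 - e1 + e2 - e3) := by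
    generalize e0 - e1 + e2 - e3 = H at *
    generalize e0 - e2 = A at *
    generalize e1 - e3 = B at *
    linear_combination (-(2 * (A + B) + 3 - H)) * q3 + 4 * q1 + 8 * q2 - r3
  linear_combination (5 * (p : K) + 9 + (6 + 8 * y) * (e0 - e1 + e2 - e3)) * q4 + (6 + 8 * y) ^ 2 * r3

lemma arith_pos (p y : ℤ) (hp : 0 < p) (hp9 : p ≠ 9) (h : 4 * y ^ 2 ≤ p) :
    0 < (5 * p + 9) ^ 2 - 4 * p * (3 + 4 * y) ^ 2 := by
  have h1 : 32 * p * y < 3 * (p + 3) ^ 2 := by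
    by_contra hc
    push Not at hc
    have h2 : (3 * (p + 3) ^ 2) ^ 2 ≤ (32 * p * y) ^ 2 :=
      pow_le_pow_left₀ (by positivity) hc 2
    have h3 : (32 * p * y) ^ 2 ≤ 256 * p ^ 3 := by
      have := mul_le_mul_of_nonneg_left h (show 0 ≤ 256 * p ^ 2 by positivity)
      linarith
    have h4 : 0 < (p - 9) ^ 2 * (9 * p ^ 2 + 14 * p + 9) := by
      have : p - 9 ≠ 0 := sub_ne_zero.mpr hp9
      positivity
    have h5 : (p - 9) ^ 2 * (9 * p ^ 2 + 14 * p + 9) = (3 * (p + 3) ^ 2) ^ 2 - 256 * p ^ 3 := by ring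
    linarith
  have h2 := mul_le_mul_of_nonneg_left h (show 0 ≤ 16 * p by positivity)
  nlinarith

lemma arith_cases (p q k : ℕ) (hp : p.Prime) (hp8 : p % 8 = 5) (hq : q.Prime) (hqk : q = 1 + k * p)
    (h4 : k = 4 → q % 8 = 1 ∨ q % 8 = 7) (hq3 : 3 < q) (j S : ℤ) (hj' : j = 3 ∨ j = 11)
    (hk' : k = 2 ∨ k = 4 ∨ k = 6 ∨ k = 8) (hj : j = 25 * p + 90 - 4 * S - k * (81 + p * j))
    (hkj : (k : ℤ) * j < 25) (hsq3 : S % 3 = 0 ∨ S % 3 = 1)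
    (hs7 : (7 : ℤ) ∣ S → ∃ w : ℤ, S = 49 * w) :
    (q = 1 + 2 * p ∧ 3 * (p : ℤ) = 4 * S + 83) := by
  have hnd : ∀ r : ℕ, r.Prime → r < q → ¬ r ∣ q := by
    intro r hr hrq hd
    have := (Nat.prime_dvd_prime_iff_eq hr hq).mp hd
    omega
  have hp3 : p % 3 ≠ 0 := by
    intro h
    have := (Nat.prime_dvd_prime_iff_eq Nat.prime_three hp).mp (Nat.dvd_of_mod_eq_zero h)
    omega
  rcases hj' with rfl | rfl <;> rcases hk' with rfl | rfl | rfl | rfl <;> push_cast at hj hkj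
  · clear hs7 h4
    have h1 : 19 * (p : ℤ) = 4 * S + 75 := by linarith
    exact absurd (Nat.dvd_of_mod_eq_zero (by omega)) (hnd 3 Nat.prime_three hq3)
  · clear hs7
    have := h4 rfl
    omega
  · exfalso
    have h1 : 7 * (p : ℤ) = 4 * S + 399 := by linarith
    have h2 : (7 : ℤ) ∣ S := by clear hs7 h4; omega
    obtain ⟨w, rfl⟩ := hs7 h2
    clear hs7 h4 h2
    exact absurd (Nat.dvd_of_mod_eq_zero (by omega)) (hnd 7 (by norm_num) (by omega))
  · clear hs7 h4
    have h1 : (p : ℤ) = 4 * S + 561 := by linarith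
    exact absurd (Nat.dvd_of_mod_eq_zero (by omega)) (hnd 3 Nat.prime_three hq3)
  · exact ⟨hqk, by linarith⟩

lemma arith_final (p q k : ℕ) (hp : p.Prime) (hp8 : p % 8 = 5) (x y : ℤ) (hx : x % 4 = 1)
    (hxy : (p : ℤ) = x ^ 2 + 4 * y ^ 2) (hq : q.Prime) (hqk : q = 1 + k * p) (hk : 2 ≤ k)
    (hk2 : k % 2 = 0) (h4 : k = 4 → q % 8 = 1 ∨ q % 8 = 7) (hq3 : 3 < q)
    (hq4 : (q : ℤ) ∣ 4 ^ p - 1)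
    (hN : (q : ℤ) ∣ (5 * p + 9) ^ 2 - 4 * p * (3 + 4 * y) ^ 2) :
    q = 11 ∨ (q = 1 + 2 * p ∧ 3 * (p : ℤ) = 4 * (3 + 4 * y) ^ 2 + 83) := by
  have hyo : y % 2 = 1 := by
    obtain ⟨c, rfl⟩ : ∃ c, x = 4 * c + 1 := ⟨x / 4, by omega⟩
    rcases Int.emod_two_eq_zero_or_one y with h | h
    · obtain ⟨v, rfl⟩ : ∃ v, y = 2 * v := ⟨y / 2, by omega⟩
      have : (p : ℤ) = 8 * (2 * c ^ 2 + c + 2 * v ^ 2) + 1 := by rw [hxy]; ring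
      omega
    · exact h
  have hy2 : 4 * y ^ 2 ≤ (p : ℤ) := by nlinarith [sq_nonneg x]
  have hNpos := arith_pos p y (by exact_mod_cast hp.pos) (by omega) hy2
  obtain ⟨v, hv⟩ : ∃ v, y = 2 * v + 1 := ⟨y / 2, by omega⟩
  obtain ⟨u, hu⟩ : ∃ u : ℤ, (p : ℤ) = 8 * u + 5 := ⟨p / 8, by omega⟩
  obtain ⟨m, hm⟩ := hN
  have hqz : (q : ℤ) = 1 + k * p := by exact_mod_cast hqk
  have hqpos : (0 : ℤ) < q := by exact_mod_cast hq.pos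
  have hm0 : 0 < m := by
    rw [hm] at hNpos
    exact pos_of_mul_pos_right hNpos hqpos.le
  have hm8 : (8 : ℤ) ∣ m := by
    have hco : IsCoprime (8 : ℤ) (q : ℤ) := by
      rw [Int.isCoprime_iff_gcd_eq_one]
      have : Nat.Coprime (2 ^ 3) q := Nat.Coprime.pow_left 3
        ((Nat.coprime_primes Nat.prime_two hq).mpr (by omega))
      exact_mod_cast this
    apply hco.dvd_of_dvd_mul_left
    rw [← hm, hu, hv]
    exact ⟨200 * u ^ 2 + 340 * u + 22 - 4 * u * (8 * v + 7) ^ 2 - 160 * v ^ 2 - 280 * v, by ring⟩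
  obtain ⟨j, hj⟩ : ∃ j : ℤ, j = 25 * p + 90 - 4 * (3 + 4 * y) ^ 2 - k * m := ⟨_, rfl⟩
  have hmj : m = 81 + p * j := by
    rw [hqz] at hm
    rw [hj]
    linear_combination -hm
  have hj8 : j % 8 = 3 := by
    rw [hu] at hmj
    obtain ⟨n, rfl⟩ := hm8
    have : 8 * (n - u * j) = 81 + 5 * j := by linear_combination hmj
    omega
  have hp5 : (5 : ℤ) ≤ p := by omega
  have hs1 : 1 ≤ (3 + 4 * y) ^ 2 := by
    have : (3 + 4 * y) ≠ 0 := by omega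
    have : 0 < (3 + 4 * y) ^ 2 := by positivity
    linarith
  by_cases hjn : j < 0
  · have hj5 : j ≤ -5 := by omega
    have hp16 : (p : ℤ) ≤ 16 := by nlinarith
    have hp' : p = 5 ∨ p = 13 := by omega
    have hy1 : y = 1 ∨ y = -1 := by
      have : y < 3 := by nlinarith
      have : -3 < y := by nlinarith
      omega
    have hdv : (q : ℤ) ∣ (5 * p + 9) ^ 2 - 4 * p * (3 + 4 * y) ^ 2 := ⟨m, hm⟩
    have hg := Int.dvd_coe_gcd hdv hq4
    rcases hp' with rfl | rfl <;> rcases hy1 with rfl | rfl <;> norm_num at hg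
    · left
      have h1 : q ∣ 11 := by exact_mod_cast hg
      exact (Nat.prime_dvd_prime_iff_eq hq (by norm_num)).mp h1
    · have := Int.le_of_dvd (by norm_num) hg
      omega
    · have := Int.le_of_dvd (by norm_num) hg
      omega
    · have := Int.le_of_dvd (by norm_num) hg
      omega
  · have hj3 : 3 ≤ j := by omega
    have hkz : (2 : ℤ) ≤ k := by exact_mod_cast hk
    have hkj : (k : ℤ) * j < 25 := by
      by_contra hc
      push Not at hc
      rw [hmj] at hj
      have := mul_le_mul_of_nonneg_right hc (show (0 : ℤ) ≤ p by positivity)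
      nlinarith
    have hk8 : k ≤ 8 := by
      have : (k : ℤ) ≤ 8 := by nlinarith
      exact_mod_cast this
    have hj12 : j ≤ 12 := by nlinarith
    rw [hmj] at hj
    have hj' : j = 3 ∨ j = 11 := by omega
    have hk' : k = 2 ∨ k = 4 ∨ k = 6 ∨ k = 8 := by omega
    have hsq3 : (3 + 4 * y) ^ 2 % 3 = 0 ∨ (3 + 4 * y) ^ 2 % 3 = 1 := by
      have : (3 + 4 * y) % 3 = 0 ∨ (3 + 4 * y) % 3 = 1 ∨ (3 + 4 * y) % 3 = 2 := by omega
      rcases this with h | h | h <;> simp [pow_two, Int.mul_emod, h]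
    have hs7 : (7 : ℤ) ∣ (3 + 4 * y) ^ 2 → ∃ w : ℤ, (3 + 4 * y) ^ 2 = 49 * w := by
      intro h7
      obtain ⟨w, hw⟩ : (7 : ℤ) ∣ 3 + 4 * y := Int.Prime.dvd_pow' (p := 7) (by norm_num) h7
      exact ⟨w ^ 2, by rw [hw]; ring⟩
    exact Or.inr (arith_cases p q k hp hp8 hq hqk h4 hq3 j _ hj' hk' hj hkj hsq3 hs7)

theorem lemma8
    (p : ℕ) (hp : p.Prime) (hp8 : p % 8 = 5)
    (x y : ℤ) (hx : x % 4 = 1) (hxy : (p : ℤ) = x ^ 2 + 4 * y ^ 2)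
    (θ : ℕ) (hθ : IsPrimitiveRoot (θ : ZMod p) (p - 1))
    (hy : 16 * (((cycD p θ 0).filter (fun a => (a + 1) % p ∈ cycD p θ 1)).card : ℤ)
        = (p : ℤ) + 1 + 2 * x - 8 * y)
    (d : ℤ) (hd : Prime d) (hd3 : 3 < d)
    (hdvd : d ∣ (Int.gcd (3 + eta4 p θ 1 + 2 * eta4 p θ 2 + 3 * eta4 p θ 3) (((4 : ℤ) ^ p - 1) / 3) : ℤ)) :
    d = 11 ∨ (d = 1 + 2 * (p : ℤ) ∧ 3 * (p : ℤ) = 4 * (3 + 4 * y) ^ 2 + 83) := by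
  obtain ⟨q, rfl⟩ : ∃ q : ℕ, d = (q : ℤ) := ⟨d.toNat, by omega⟩
  have hq : q.Prime := Nat.prime_iff_prime_int.mpr hd
  have hq3 : 3 < q := by exact_mod_cast hd3
  haveI : Fact p.Prime := ⟨hp⟩
  haveI : Fact q.Prime := ⟨hq⟩
  have hdU := hdvd.trans (Int.gcd_dvd_left ..)
  have hd4' := hdvd.trans (Int.gcd_dvd_right ..)
  have hd4 : (q : ℤ) ∣ 4 ^ p - 1 := by
    refine hd4'.trans (Int.ediv_dvd_of_dvd ?_)
    have := sub_dvd_pow_sub_pow (4 : ℤ) 1 p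
    simpa using this
  have ord : ∀ (K : Type) [Field K] [CharP K q], IsPrimitiveRoot (4 : K) p := by
    intro K _ _
    have h1 : (4 : K) ^ p = 1 := by
      have := (CharP.intCast_eq_zero_iff K q _).mpr hd4
      push_cast at this
      exact sub_eq_zero.mp this
    have h2 : (4 : K) ≠ 1 := by
      intro h
      have h3 : ((3 : ℤ) : K) = 0 := by push_cast; linear_combination h
      have h4 := Int.le_of_dvd (by norm_num) ((CharP.intCast_eq_zero_iff K q _).mp h3)
      omega
    rw [← orderOf_eq_prime h1 h2]
    exact IsPrimitiveRoot.orderOf _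
  have h4q := ord (ZMod q)
  have h2q : (2 : ZMod q) ≠ 0 := by
    intro h
    have h3 : ((2 : ℤ) : ZMod q) = 0 := by exact_mod_cast h
    have h4 := Int.le_of_dvd (by norm_num) ((CharP.intCast_eq_zero_iff (ZMod q) q _).mp h3)
    omega
  have h4ne : (4 : ZMod q) ≠ 0 := by
    rw [show (4 : ZMod q) = 2 * 2 by norm_num]; exact mul_ne_zero h2q h2q
  have hpd : p ∣ q - 1 := by
    have := ZMod.orderOf_dvd_card_sub_one h4ne
    rwa [← h4q.eq_orderOf] at this
  obtain ⟨k, hk⟩ := hpd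
  have hqk : q = 1 + k * p := by rw [mul_comm k, ← hk]; omega
  have hqo : q % 2 = 1 := by
    rcases hq.eq_two_or_odd with h | h <;> omega
  have hk2 : k % 2 = 0 := by
    rcases Nat.mod_two_eq_zero_or_one k with h | h
    · exact h
    · have : (k * p) % 2 = 1 := by rw [Nat.mul_mod, h]; omega
      omega
  have hk0 : k ≠ 0 := by rintro rfl; omega
  have hpq : p < q := by
    rw [hqk]; nlinarith [hp.pos, Nat.pos_of_ne_zero hk0]
  obtain ⟨i, hi⟩ := IsAlgClosed.exists_eq_mul_self (-1 : AlgebraicClosure (ZMod q))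
  have h20 : (2 : AlgebraicClosure (ZMod q)) ≠ 0 := by
    intro h
    have h3 : ((2 : ℤ) : AlgebraicClosure (ZMod q)) = 0 := by exact_mod_cast h
    have h4 := Int.le_of_dvd (by norm_num) ((CharP.intCast_eq_zero_iff _ q _).mp h3)
    omega
  have hp0 : (p : AlgebraicClosure (ZMod q)) ≠ 0 := by
    intro h
    have := Nat.le_of_dvd hp.pos ((CharP.cast_eq_zero_iff _ q p).mp h)
    omega
  have hN := period_rel hp8 x y hx hxy hθ hy i hi.symm h20 hp0 (ord _)
    ((CharP.intCast_eq_zero_iff _ q _).mpr hdU)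
  have hN' := (CharP.intCast_eq_zero_iff _ q _).mp hN
  have h4k : k = 4 → q % 8 = 1 ∨ q % 8 = 7 := by
    rintro rfl
    rw [← ZMod.exists_sq_eq_two_iff (by omega), ZMod.euler_criterion _ h2q,
      show q / 2 = 2 * p by omega, pow_mul, show (2 : ZMod q) ^ 2 = 4 by norm_num]
    exact h4q.pow_eq_one
  have := arith_final p q k hp hp8 x y hx hxy hq hqk (by omega) hk2 h4k hq3 hd4 hN'
  exact_mod_cast this
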